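/- Let Sp(V) be the group of linear automorphisms of V preserving ω, acting on H by g·(v,z) = (g v, z), and let (π, ℋ) be the Heisenberg representation with central character ψ. Then there exists a group homomorphism ρ : Sp(V) → GL(ℋ) such that ρ(g) ∘ π((v,z)) ∘ ρ(g)⁻¹ = π((g v, z)) for every g ∈ Sp(V) and (v,z) ∈ H. In particular, over a finite field of odd characteristic the Weil representation exists as a linear (not merely projective) representation of Sp(V). -/

import Mathlib

open scoped BigOperators
attribute [local instance] Classical.propDecidable

variable {k : Type} [Field k] [Fintype k]
variable {V : Type} [AddCommGroup V] [Module k V] [Fintype V]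

/-- Multiplication of the Heisenberg group `H = V × k`:
`(v,z)·(v',z') = (v + v', z + z' + (1/2) ω(v,v'))`. -/
def hMul (ω : V →ₗ[k] V →ₗ[k] k) (x y : V × k) : V × k :=
  (x.1 + y.1, x.2 + y.2 + (2 : k)⁻¹ * ω x.1 y.1)

/-- Inversion in the Heisenberg group. -/
def hInv (ω : V →ₗ[k] V →ₗ[k] k) (x : V × k) : V × k :=
  (-x.1, -x.2 + (2 : k)⁻¹ * ω x.1 x.1)

/-- Right translation `(π(h)f)(h') = f(h'·h)` of functions on the Heisenberg group. -/
def rt (ω : V →ₗ[k] V →ₗ[k] k) (h : V × k) (f : V × k → ℂ) : V × k → ℂ :=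
  fun x => f (hMul ω x h)

/-- The model `ℂ(L\H, ψ)`: functions `f : H → ℂ` with `f((0,z)·(l,0)·h) = ψ(z)·f(h)`
for `z ∈ k`, `l ∈ L`. -/
noncomputable def model (ω : V →ₗ[k] V →ₗ[k] k) (L : Submodule k V) (ψ : k → ℂ) :
    Submodule ℂ (V × k → ℂ) where
  carrier := {f | ∀ z : k, ∀ l ∈ L, ∀ h : V × k,
    f (hMul ω ((0 : V), z) (hMul ω (l, (0 : k)) h)) = ψ z * f h}
  add_mem' := by
    intro f g hf hg z l hl h
    simp only [Pi.add_apply, hf z l hl h, hg z l hl h]; ring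
  zero_mem' := by intro z l hl h; simp
  smul_mem' := by
    intro c f hf z l hl h
    simp only [Pi.smul_apply, smul_eq_mul, hf z l hl h]; ring

/-- The space `ℂ(M\H/L, ψ)`: functions `K : H → ℂ` with
`K((0,z)·(m,0)·h·(l,0)) = ψ(z)·K(h)` for `z ∈ k`, `m ∈ M`, `l ∈ L`. -/
noncomputable def biModel (ω : V →ₗ[k] V →ₗ[k] k) (M L : Submodule k V) (ψ : k → ℂ) :
    Submodule ℂ (V × k → ℂ) where
  carrier := {f | ∀ z : k, ∀ m ∈ M, ∀ l ∈ L, ∀ h : V × k,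
    f (hMul ω (hMul ω (hMul ω ((0 : V), z) (m, (0 : k))) h) (l, (0 : k))) = ψ z * f h}
  add_mem' := by
    intro f g hf hg z m hm l hl h
    simp only [Pi.add_apply, hf z m hm l hl h, hg z m hm l hl h]; ring
  zero_mem' := by intro z m hm l hl h; simp
  smul_mem' := by
    intro c f hf z m hm l hl h
    simp only [Pi.smul_apply, smul_eq_mul, hf z m hm l hl h]; ring

/-- The averaging operator `F_{M,L}[f](h) = ∑_{m ∈ M} f((m,0)·h)`. -/
noncomputable def avg (ω : V →ₗ[k] V →ₗ[k] k) (M : Submodule k V) :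
    (V × k → ℂ) →ₗ[ℂ] (V × k → ℂ) where
  toFun f := fun h => ∑ m : M, f (hMul ω ((m : V), (0 : k)) h)
  map_add' f g := by funext h; simp [Finset.sum_add_distrib]
  map_smul' c f := by funext h; simp [Finset.mul_sum]

/-- Normalized convolution on the Heisenberg group:
`(K ∗ f)(h) = q^{-(n+1)} ∑_{h' ∈ H} K(h')·f(h'⁻¹·h)`. -/
noncomputable def conv (ω : V →ₗ[k] V →ₗ[k] k) (n : ℕ) (K f : V × k → ℂ) : V × k → ℂ :=
  fun h => ((Fintype.card k : ℂ))⁻¹ ^ (n + 1) * ∑ x : V × k, K x * f (hMul ω (hInv ω x) h)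

/-- The one-dimensional Gauss sum `G(ψ) = ∑_{z ∈ k} ψ(z²/2)`. -/
noncomputable def gaussSum' (ψ : k → ℂ) : ℂ := ∑ z : k, ψ ((2 : k)⁻¹ * z ^ 2)

/-- The normalization coefficient `A_{M°,L°} = (G(ψ)/q)ⁿ · σ((−1)^{n(n−1)/2} ω_∧(o_L,o_M))`,
with the orientations presented by bases and `ω_∧(o_L,o_M) = det (ω(bL i, bM j))_{ij}`,
and `σ` the Legendre (quadratic) character. -/
noncomputable def Acoef (ω : V →ₗ[k] V →ₗ[k] k) (ψ : k → ℂ) (n : ℕ)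
    {M L : Submodule k V} (bM : Module.Basis (Fin n) k M) (bL : Module.Basis (Fin n) k L) : ℂ :=
  (gaussSum' ψ / (Fintype.card k : ℂ)) ^ n *
    ((quadraticChar k ((-1 : k) ^ (n * (n - 1) / 2) *
      (Matrix.of fun i j => ω ((bL i : V)) ((bM j : V))).det) : ℤ) : ℂ)

/-- The symplectic group `Sp(V)` of linear automorphisms of `V` preserving `ω`. -/
def Sp (ω : V →ₗ[k] V →ₗ[k] k) : Subgroup (V ≃ₗ[k] V) where
  carrier := {g | ∀ u v : V, ω (g u) (g v) = ω u v}
  one_mem' := by intro u v; rfl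
  mul_mem' := by
    intro a b ha hb u v
    have h : ∀ x : V, (a * b) x = a (b x) := fun x => rfl
    rw [h, h, ha, hb]
  inv_mem' := by
    intro a ha u v
    have h1 : a (a⁻¹ u) = u := a.apply_symm_apply u
    have h2 : a (a⁻¹ v) = v := a.apply_symm_apply v
    have := ha (a⁻¹ u) (a⁻¹ v)
    rw [h1, h2] at this
    exact this.symm

/-- A nontrivial (nowhere-vanishing) additive character `ψ : k → ℂ*`. -/
def IsAddChar (ψ : k → ℂ) : Prop :=
  (∀ a b : k, ψ (a + b) = ψ a * ψ b) ∧ (∀ a : k, ψ a ≠ 0) ∧ (∃ a : k, ψ a ≠ 1)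

/-- `π` is a Heisenberg representation on `ℋ` with central character `ψ`:
a representation of `H = V × k` by linear maps, with the center acting by `ψ`,
which is irreducible. -/
def IsHeisenbergRep (ω : V →ₗ[k] V →ₗ[k] k) (ψ : k → ℂ)
    {ℋ : Type} [AddCommGroup ℋ] [Module ℂ ℋ] (π : V × k → (ℋ →ₗ[ℂ] ℋ)) : Prop :=
  π ((0 : V), (0 : k)) = LinearMap.id ∧
  (∀ x y : V × k, π (hMul ω x y) = (π x).comp (π y)) ∧
  (∀ z : k, π ((0 : V), z) = ψ z • LinearMap.id) ∧
  (∀ W : Submodule ℂ ℋ, (∀ x : V × k, ∀ w ∈ W, π x w ∈ W) → W = ⊥ ∨ W = ⊤)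

/-- The action `g_*` of a symplectic automorphism on functions on `H`, `(g_* f)(h) = f(g⁻¹·h)`. -/
def gstar (g : V ≃ₗ[k] V) (f : V × k → ℂ) : V × k → ℂ :=
  fun x => f (g.symm x.1, x.2)


/-!
The Weyl operators `U v = π (v, 0)` form a basis of `End ℋ`: they span by Burnside's theorem, and
they are independent because all of them except `U 0` are traceless. So a symplectic `g` induces an
automorphism `U v ↦ U (g v)` of the matrix algebra `End ℋ`, which is conjugation by an operator
that is unique up to a scalar. The only question is how to choose the scalars multiplicatively.

The parity operator, a multiple of `∑ v, U v`, is an involution of trace `1` that commutes with all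
these operators. They therefore preserve its two eigenspaces, whose dimensions differ by `1`, and
the quotient of their determinants on these eigenspaces is multiplicative and homogeneous of degree
`1`. Exactly one multiple of each operator makes this quotient equal to `1`.
-/

open Module

section BurnsideTheorem

variable {K E : Type*} [Field K] [IsAlgClosed K] [AddCommGroup E] [Module K E]
  [FiniteDimensional K E]

theorem subalgebra_eq_top_of_isSimpleModule (A : Subalgebra K (End K E)) [IsSimpleModule A E] :
    A = ⊤ := by
  refine eq_top_iff.mpr fun T _ => ?_
  have schur (φ : End A E) : ∃ c : K, ∀ x, φ x = c • x :=
    let ⟨c, hc⟩ := (IsSimpleModule.algebraMap_end_bijective_of_isAlgClosed K).2 φ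
    ⟨c, fun x => congr($hc x).symm⟩
  let T' : End (End A E) E :=
    { T with
      map_smul' φ x := by
        obtain ⟨c, hc⟩ := schur φ
        simp [hc] }
  let b := finBasis K E
  obtain ⟨a, ha⟩ := jacobson_density T' (Finset.univ.image b)
  have hTa : T = a := b.ext fun i => ha (b i) (Finset.mem_image_of_mem b (Finset.mem_univ i))
  exact hTa ▸ a.2

end BurnsideTheorem

section Compression

variable {K E : Type*} [Field K] [AddCommGroup E] [Module K E]

/-- The compression `x ↦ e (A x)` of the endomorphism `A` to the range of `e`. If `e` is an
idempotent commuting with `A`, it is the restriction of `A` to the range of `e`; not asking for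
this keeps the determinants below free of proof arguments. -/
def compression (e A : End K E) : End K (LinearMap.range e) :=
  e.rangeRestrict ∘ₗ A ∘ₗ (LinearMap.range e).subtype

variable {e B : End K E}

lemma compression_one (he : IsIdempotentElem e) : compression e 1 = 1 := by
  ext x
  exact (LinearMap.IsIdempotentElem.mem_range_iff he).mp x.2

lemma compression_smul (c : K) (e A : End K E) :
    compression e (c • A) = c • compression e A := by
  ext x
  simp [compression]

lemma compression_mul (he : IsIdempotentElem e) (A : End K E) (hB : Commute B e) :
    compression e (A * B) = compression e A * compression e B := by
  ext ⟨_, x, rfl⟩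
  have hBe : e * B * e = B * e := by rw [← hB.eq, mul_assoc, he.eq]
  exact congr(e (A ($hBe.symm x)))

end Compression

section Berezinian

variable {K E : Type*} [Field K] [AddCommGroup E] [Module K E]

/-- For an involution `Q`, the projection onto the `1`-eigenspace of `Q` along its
`(-1)`-eigenspace; the complementary projection is `evenProj (-Q)`. -/
def evenProj (Q : End K E) : End K E := (2 : K)⁻¹ • (1 + Q)

/-- The superdeterminant of an operator `A` that is even for the grading of `E` by the
eigenspaces of an involution `Q`: the determinant of `A` on the `1`-eigenspace divided by its
determinant on the `(-1)`-eigenspace. -/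
noncomputable def berezinian (Q A : End K E) : K :=
  LinearMap.det (compression (evenProj Q) A) / LinearMap.det (compression (evenProj (-Q)) A)

variable {Q B : End K E}

lemma commute_evenProj (hB : Commute B Q) : Commute B (evenProj Q) :=
  ((Commute.one_right B).add_right hB).smul_right _

variable [CharZero K]

lemma isIdempotentElem_evenProj (hQ : Q * Q = 1) : IsIdempotentElem (evenProj Q) := by
  have hsq : (1 + Q) * (1 + Q) = (2 : K) • (1 + Q) := by
    rw [two_smul, add_mul, mul_add, mul_add, hQ]
    simp only [one_mul, mul_one]
    abel
  rw [IsIdempotentElem, evenProj, smul_mul_smul_comm, hsq, smul_smul,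
    inv_mul_cancel_right₀ two_ne_zero]

lemma berezinian_one (hQ : Q * Q = 1) : berezinian Q 1 = 1 := by
  have hQ' : -Q * -Q = 1 := by rw [neg_mul_neg, hQ]
  simp [berezinian, compression_one, isIdempotentElem_evenProj, hQ, hQ']

lemma berezinian_mul (hQ : Q * Q = 1) (A : End K E) (hB : Commute B Q) :
    berezinian Q (A * B) = berezinian Q A * berezinian Q B := by
  have hQ' : -Q * -Q = 1 := by rw [neg_mul_neg, hQ]
  rw [berezinian, compression_mul (isIdempotentElem_evenProj hQ) A (commute_evenProj hB),
    compression_mul (isIdempotentElem_evenProj hQ') A (commute_evenProj hB.neg_right),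
    map_mul, map_mul, mul_div_mul_comm]
  rfl

lemma berezinian_ne_zero (hQ : Q * Q = 1) {A : (End K E)ˣ} (hA : Commute (A : End K E) Q) :
    berezinian Q A ≠ 0 := by
  refine right_ne_zero_of_mul_eq_one (a := berezinian Q ↑A⁻¹) ?_
  rw [← berezinian_mul hQ _ hA, Units.inv_mul, berezinian_one hQ]

variable [FiniteDimensional K E]

lemma finrank_range_evenProj (hQ : Q * Q = 1) (htr : LinearMap.trace K E Q = 1) :
    finrank K (LinearMap.range (evenProj Q)) = finrank K (LinearMap.range (evenProj (-Q))) + 1 := by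
  have hQ' : -Q * -Q = 1 := by rw [neg_mul_neg, hQ]
  rw [← Nat.cast_inj (R := K), Nat.cast_succ,
    ← (LinearMap.IsIdempotentElem.isProj_range _ (isIdempotentElem_evenProj hQ)).trace,
    ← (LinearMap.IsIdempotentElem.isProj_range _ (isIdempotentElem_evenProj hQ')).trace]
  simp only [evenProj, map_smul, map_add, map_neg, htr, smul_eq_mul]
  ring

lemma berezinian_smul (hQ : Q * Q = 1) (htr : LinearMap.trace K E Q = 1) {c : K} (hc : c ≠ 0)
    (A : End K E) : berezinian Q (c • A) = c * berezinian Q A := by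
  simp only [berezinian, compression_smul, LinearMap.det_smul, finrank_range_evenProj hQ htr]
  rw [pow_succ', mul_assoc, mul_div_assoc, mul_div_mul_left _ _ (pow_ne_zero _ hc)]

end Berezinian

section Parity

variable {K G E : Type*} [Field K] [AddCommGroup E] [Module K E] [Fintype G]

/-- The parity operator of a family `U` as in `IsWeylSystem` below. In the Schrödinger model of the
Heisenberg representation it sends `f` to `x ↦ f (-x)`. -/
noncomputable def parity (U : G → End K E) : End K E :=
  (finrank K E : K)⁻¹ • ∑ v, U v

lemma commute_parity {U : G → End K E} {A : End K E} (σ : G ≃ G)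
    (hA : ∀ v, SemiconjBy A (U v) (U (σ v))) : Commute A (parity U) := by
  refine Commute.smul_right ?_ _
  rw [commute_iff_eq, Finset.mul_sum, Finset.sum_mul]
  exact (Finset.sum_congr rfl fun v _ => hA v).trans (σ.sum_comp fun v => U v * A)

end Parity

section WeylSystem

variable {K G E : Type*} [Field K] [AddCommGroup G] [AddCommGroup E] [Module K E]

/-- An irreducible Weyl system: operators `U v`, indexed by an abelian group, that form a
projective representation whose cocycle is an alternating bicharacter `β` with nondegenerate
square. For a Heisenberg representation `π` these are the operators `π (v, 0)`. -/
structure IsWeylSystem (β : G →+ AddChar G K) (U : G → End K E) : Prop where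
  apply_zero : U 0 = 1
  apply_mul_apply : ∀ v w, U v * U w = β v w • U (v + w)
  alternating : ∀ v, β v v = 1
  separating : ∀ v, (∀ w, β v w ^ 2 = 1) → v = 0
  irreducible : ∀ W : Submodule K E, (∀ v, W ∈ End.invtSubmodule (U v)) → W = ⊥ ∨ W = ⊤

namespace IsWeylSystem

variable {β : G →+ AddChar G K} {U : G → End K E}

section Relations

lemma bichar_mul_swap (h : IsWeylSystem β U) (v w : G) : β v w * β w v = 1 := by
  have hvw := h.alternating (v + w)
  simpa only [map_add, AddChar.add_apply, AddChar.map_add_eq_mul, h.alternating, one_mul,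
    mul_one, mul_comm] using hvw

lemma apply_neg_mul_apply (h : IsWeylSystem β U) (v : G) : U (-v) * U v = 1 := by
  rw [h.apply_mul_apply, map_neg, AddChar.neg_apply, AddChar.map_neg_eq_inv, h.alternating, inv_one,
    one_smul, neg_add_cancel, h.apply_zero]

lemma apply_mul_apply_comm (h : IsWeylSystem β U) (v w : G) :
    U v * U w = β v w ^ 2 • (U w * U v) := by
  rw [h.apply_mul_apply, h.apply_mul_apply, smul_smul, sq, mul_assoc, h.bichar_mul_swap, mul_one,
    add_comm]

lemma trace_apply_of_ne_zero (h : IsWeylSystem β U) {v : G} (hv : v ≠ 0) :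
    LinearMap.trace K E (U v) = 0 := by
  obtain ⟨w, hw⟩ : ∃ w, β v w ^ 2 ≠ 1 := by
    by_contra! hall
    exact hv (h.separating v hall)
  have hconj : U (-w) * U v * U w = β v w ^ 2 • U v := by
    rw [mul_assoc, h.apply_mul_apply_comm, mul_smul_comm, ← mul_assoc, h.apply_neg_mul_apply,
      one_mul]
  have hinv : LinearMap.trace K E (U (-w) * U v * U w) = LinearMap.trace K E (U v) := by
    have hw_neg : U w * U (-w) = 1 := by simpa only [neg_neg] using h.apply_neg_mul_apply (-w)
    rw [LinearMap.trace_mul_comm, ← mul_assoc, hw_neg, one_mul]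
  rw [hconj, map_smul, smul_eq_mul] at hinv
  by_contra hne
  exact hw ((mul_eq_right₀ hne).mp hinv)

lemma sum_bichar [Fintype G] [CharZero K] (h : IsWeylSystem β U) {v : G} (hv : v ≠ 0) :
    ∑ w, β v w = 0 := by
  refine AddChar.sum_eq_zero_iff_ne_zero.mpr fun hβ => hv (h.separating v fun w => ?_)
  rw [hβ, AddChar.zero_apply, one_pow]

lemma sum_mul_sum [Fintype G] [CharZero K] (h : IsWeylSystem β U) :
    (∑ v, U v) * ∑ v, U v = (Fintype.card G : K) • 1 := by
  calc (∑ v, U v) * ∑ v, U v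
      = ∑ w, ∑ v, U v * U w := by rw [Finset.sum_mul_sum, Finset.sum_comm]
    _ = ∑ w, ∑ v, U (v - w) * U w :=
        Finset.sum_congr rfl fun w _ => ((Equiv.subRight w).sum_comp fun v => U v * U w).symm
    _ = ∑ v, ∑ w, β v w • U v := by
        rw [Finset.sum_comm]
        simp only [h.apply_mul_apply, map_sub, AddChar.sub_apply, sub_add_cancel]
        simp only [AddChar.map_neg_eq_inv, h.alternating, inv_one, mul_one]
    _ = ∑ v, (∑ w, β v w) • U v := by simp only [Finset.sum_smul]
    _ = (Fintype.card G : K) • 1 := by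
        rw [Fintype.sum_eq_single 0 fun v hv => by rw [h.sum_bichar hv, zero_smul], h.apply_zero]
        simp

end Relations

section Span

variable [IsAlgClosed K] [FiniteDimensional K E] [Nontrivial E]

lemma span_range_eq_top (h : IsWeylSystem β U) : Submodule.span K (Set.range U) = ⊤ := by
  have hmul : Submodule.span K (Set.range U) * Submodule.span K (Set.range U) ≤
      Submodule.span K (Set.range U) := by
    rw [Submodule.span_mul_span, Submodule.span_le]
    rintro _ ⟨_, ⟨v, rfl⟩, _, ⟨w, rfl⟩, rfl⟩
    change U v * U w ∈ Submodule.span K (Set.range U)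
    rw [h.apply_mul_apply]
    exact Submodule.smul_mem _ _ (Submodule.subset_span ⟨v + w, rfl⟩)
  let A : Subalgebra K (End K E) := (Submodule.span K (Set.range U)).toSubalgebra
    (h.apply_zero ▸ Submodule.subset_span ⟨0, rfl⟩)
    fun _ _ hx hy => hmul (Submodule.mul_mem_mul hx hy)
  have hA : IsSimpleModule A E := (isSimpleModule_iff _ _).mpr
    { eq_bot_or_eq_top := fun W => by
        simpa using h.irreducible (W.restrictScalars K) fun v x hx =>
          W.smul_mem (⟨U v, Submodule.subset_span ⟨v, rfl⟩⟩ : A) hx }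
  have htop := subalgebra_eq_top_of_isSimpleModule A
  exact congr(Subalgebra.toSubmodule $htop)

lemma exists_eq_smul_one (h : IsWeylSystem β U) {A : End K E} (hA : ∀ v, Commute A (U v)) :
    ∃ c : K, A = c • 1 := by
  have hspan : Submodule.span K (Set.range U) ≤
      Subalgebra.toSubmodule (Subalgebra.centralizer K {A}) := by
    rw [Submodule.span_le]
    rintro _ ⟨v, rfl⟩ _ rfl
    exact hA v
  have hcenter : A ∈ Subalgebra.center K (End K E) :=
    Subalgebra.mem_center_iff.mpr fun T =>
      (hspan (h.span_range_eq_top ▸ Submodule.mem_top : T ∈ _) A rfl).symm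
  obtain ⟨c, hc⟩ := (Algebra.IsCentral.mem_center_iff K).mp hcenter
  exact ⟨c, hc.symm ▸ Algebra.algebraMap_eq_smul_one c⟩

end Span

section Trace

variable [CharZero K] [FiniteDimensional K E] [Nontrivial E]

lemma linearIndependent (h : IsWeylSystem β U) : LinearIndependent K U := by
  have hd : (finrank K E : K) ≠ 0 := Nat.cast_ne_zero.mpr finrank_pos.ne'
  refine .of_pairwise_dual_eq_zero_one U
    (fun v => (finrank K E : K)⁻¹ • LinearMap.trace K E ∘ₗ LinearMap.mulLeft K (U (-v))) ?_ ?_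
  · intro v w hvw
    have hne : -v + w ≠ 0 := fun h0 => hvw (neg_add_eq_zero.mp h0)
    simp [h.apply_mul_apply, h.trace_apply_of_ne_zero hne]
  · intro v
    simp [h.apply_neg_mul_apply, hd]

lemma trace_parity [Fintype G] (h : IsWeylSystem β U) : LinearMap.trace K E (parity U) = 1 := by
  have hd : (finrank K E : K) ≠ 0 := Nat.cast_ne_zero.mpr finrank_pos.ne'
  rw [parity, map_smul, map_sum, Fintype.sum_eq_single 0 fun v hv => h.trace_apply_of_ne_zero hv,
    h.apply_zero, LinearMap.trace_one, smul_eq_mul, inv_mul_cancel₀ hd]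

end Trace

section Basis

variable [IsAlgClosed K] [CharZero K] [FiniteDimensional K E] [Nontrivial E]

/-- The operators of a Weyl system, as a basis of the endomorphism algebra. -/
noncomputable def basis (h : IsWeylSystem β U) : Basis G K (End K E) :=
  Basis.mk h.linearIndependent h.span_range_eq_top.ge

lemma basis_apply (h : IsWeylSystem β U) (v : G) : h.basis v = U v :=
  Basis.mk_apply ..

lemma exists_semiconjBy (h : IsWeylSystem β U) (σ : G ≃+ G)
    (hσ : ∀ v w, β (σ v) (σ w) = β v w) :
    ∃ A : (End K E)ˣ, ∀ v, SemiconjBy (A : End K E) (U v) (U (σ v)) := by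
  let l := h.basis.equiv h.basis σ.toEquiv
  have hl (v : G) : l (U v) = U (σ v) := by
    rw [← h.basis_apply v, h.basis.equiv_apply, h.basis_apply]
    rfl
  have hl_one : l 1 = 1 := by rw [← h.apply_zero, hl, map_zero]
  have hl_mul : ∀ S T, l (S * T) = l S * l T := by
    refine (LinearMap.map_mul_iff l.toLinearMap).mpr (h.basis.ext fun v => h.basis.ext fun w => ?_)
    simp [h.basis_apply, h.apply_mul_apply, hl, hσ]
  obtain ⟨A, hA⟩ := End.mulSemiringActionToAlgEquiv_conjAct_surjective
    (AlgEquiv.ofLinearEquiv l hl_one hl_mul)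
  refine ⟨ConjAct.ofConjAct A, fun v => ?_⟩
  have hAv : A • U v = U (σ v) := congr($hA (U v)).trans (hl v)
  rw [SemiconjBy, ← hAv, ConjAct.units_smul_def, Units.inv_mul_cancel_right]

lemma card_eq_finrank_sq [Fintype G] (h : IsWeylSystem β U) : Fintype.card G = finrank K E ^ 2 := by
  rw [← finrank_eq_card_basis h.basis, finrank_linearMap, sq]

lemma parity_mul_self [Fintype G] (h : IsWeylSystem β U) : parity U * parity U = 1 := by
  have hd : (finrank K E : K) ≠ 0 := Nat.cast_ne_zero.mpr finrank_pos.ne'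
  rw [parity, smul_mul_smul_comm, h.sum_mul_sum, h.card_eq_finrank_sq, smul_smul, Nat.cast_pow]
  field_simp
  simp

end Basis

end IsWeylSystem

/-- A Weil operator over `σ`: an operator implementing `σ` on a Weyl system. The Berezinian
condition singles out one of the scalar multiples of such an operator. -/
structure IsWeilOperator [Fintype G] (U : G → End K E) (σ : G ≃+ G) (A : (End K E)ˣ) :
    Prop where
  semiconjBy : ∀ v, SemiconjBy (A : End K E) (U v) (U (σ v))
  berezinian_eq_one : berezinian (parity U) A = 1

namespace IsWeylSystem

variable [Fintype G] [IsAlgClosed K] [CharZero K] [FiniteDimensional K E] [Nontrivial E]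
  {β : G →+ AddChar G K} {U : G → End K E}

lemma isWeilOperator_unique (h : IsWeylSystem β U) {σ : G ≃+ G} {A B : (End K E)ˣ}
    (hA : IsWeilOperator U σ A) (hB : IsWeilOperator U σ B) : A = B := by
  have hcomm (v : G) : Commute ((↑B⁻¹ : End K E) * (A : End K E)) (U v) :=
    (hB.semiconjBy v).units_inv_symm_left.mul_left (hA.semiconjBy v)
  obtain ⟨c, hc⟩ := h.exists_eq_smul_one hcomm
  have hAB : (A : End K E) = c • (B : End K E) := by
    rw [Units.inv_mul_eq_iff_eq_mul] at hc
    rw [hc, mul_smul_comm, mul_one]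
  have hc0 : c ≠ 0 := by
    rintro rfl
    exact A.ne_zero (by rw [hAB, zero_smul])
  have hc1 : c = 1 := by
    have hber := hA.berezinian_eq_one
    rwa [hAB, berezinian_smul h.parity_mul_self h.trace_parity hc0, hB.berezinian_eq_one,
      mul_one] at hber
  exact Units.ext (by rw [hAB, hc1, one_smul])

lemma exists_isWeilOperator (h : IsWeylSystem β U) (σ : G ≃+ G)
    (hσ : ∀ v w, β (σ v) (σ w) = β v w) : ∃ A, IsWeilOperator U σ A := by
  obtain ⟨B, hB⟩ := h.exists_semiconjBy σ hσ
  have hber : berezinian (parity U) (B : End K E) ≠ 0 :=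
    berezinian_ne_zero h.parity_mul_self (commute_parity σ.toEquiv hB)
  refine ⟨(Units.mk0 _ hber)⁻¹ • B, fun v => ?_, ?_⟩
  · exact (hB v).smul_left _
  · exact (berezinian_smul h.parity_mul_self h.trace_parity (inv_ne_zero hber) _).trans
      (inv_mul_cancel₀ hber)

lemma isWeilOperator_mul (h : IsWeylSystem β U) {σ τ : G ≃+ G} {A B : (End K E)ˣ}
    (hA : IsWeilOperator U σ A) (hB : IsWeilOperator U τ B) :
    IsWeilOperator U (τ.trans σ) (A * B) where
  semiconjBy v := (hA.semiconjBy (τ v)).mul_left (hB.semiconjBy v)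
  berezinian_eq_one := by
    rw [Units.val_mul, berezinian_mul h.parity_mul_self _ (commute_parity τ.toEquiv hB.semiconjBy),
      hA.berezinian_eq_one, hB.berezinian_eq_one, mul_one]

end IsWeylSystem

theorem weil_representation_exists_general [IsAlgClosed K] [CharZero K]
    [FiniteDimensional K E] [Nontrivial E] {β : G →+ AddChar G K} {U : G → End K E}
    (h : IsWeylSystem β U) {Γ : Type*} [Group Γ] [DistribMulAction Γ G]
    (hβ : ∀ (g : Γ) (v w : G), β (g • v) (g • w) = β v w) :
    ∃ ρ : Γ →* (E ≃ₗ[K] E), ∀ g v x, ρ g (U v ((ρ g)⁻¹ x)) = U (g • v) x := by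
  have := h.linearIndependent.finite
  cases nonempty_fintype G
  choose A hA using fun g : Γ => h.exists_isWeilOperator (DistribMulAction.toAddEquiv G g) (hβ g)
  have hA_mul (g g' : Γ) : A (g * g') = A g * A g' := by
    refine h.isWeilOperator_unique (hA (g * g')) ?_
    convert h.isWeilOperator_mul (hA g) (hA g')
    ext v
    exact mul_smul g g' v
  refine ⟨(LinearMap.GeneralLinearGroup.generalLinearEquiv K E).toMonoidHom.comp
    (MonoidHom.mk' A hA_mul), fun g v x => ?_⟩
  have hconj : (A g : End K E) * U v * ↑(A g)⁻¹ = U (g • v) := by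
    rw [((hA g).semiconjBy v).eq, Units.mul_inv_cancel_right]
    rfl
  exact congr($hconj x)

end WeylSystem

section HeisenbergBichar

variable {F W R : Type*} [Field F] [AddCommGroup W] [Module F W] [CommMonoid R]
  (ω : W →ₗ[F] W →ₗ[F] F) (ψ : AddChar F R)

/-- The bicharacter `(v, w) ↦ ψ (ω(v, w) / 2)`, the cocycle of a Heisenberg representation. -/
def heisenbergBichar : W →+ AddChar W R :=
  AddMonoidHom.mk' (fun v => ψ.compAddMonoidHom ((2 : F)⁻¹ • ω v).toAddMonoidHom) fun v v' => by
    ext w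
    simp [AddChar.map_add_eq_mul]

lemma heisenbergBichar_apply (v w : W) :
    heisenbergBichar ω ψ v w = ψ ((2 : F)⁻¹ * ω v w) :=
  rfl

variable {ω ψ}

lemma heisenbergBichar_separating (h2 : (2 : F) ≠ 0)
    (hω : ∀ v, (∀ w, ω v w = 0) → v = 0) (hψ : ψ ≠ 1) (v : W)
    (hv : ∀ w, heisenbergBichar ω ψ v w ^ 2 = 1) : v = 0 := by
  refine hω v fun w => ?_
  by_contra hvw
  obtain ⟨a, ha⟩ := AddChar.ne_one_iff.mp hψ
  refine ha ?_
  have ha' := hv ((a / ω v w) • w)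
  rwa [heisenbergBichar_apply, map_smul, smul_eq_mul, div_mul_cancel₀ _ hvw,
    ← AddChar.map_nsmul_eq_pow, nsmul_eq_mul, Nat.cast_ofNat, mul_inv_cancel_left₀ h2] at ha'

end HeisenbergBichar

section HeisenbergRep

variable {F W : Type} [Field F] [AddCommGroup W] [Module F W] {ω : W →ₗ[F] W →ₗ[F] F}

/-- A character in the sense of `IsAddChar`, bundled as an `AddChar`. -/
def IsAddChar.toAddChar {ψ : F → ℂ} (hψ : IsAddChar ψ) : AddChar F ℂ where
  toFun := ψ
  map_zero_eq_one' := (mul_eq_left₀ (hψ.2.1 0)).mp (by rw [← hψ.1, add_zero])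
  map_add_eq_mul' := hψ.1

lemma IsAddChar.toAddChar_ne_one {ψ : F → ℂ} (hψ : IsAddChar ψ) : hψ.toAddChar ≠ 1 :=
  AddChar.ne_one_iff.mpr hψ.2.2

variable {ψ : F → ℂ} {ℋ : Type} [AddCommGroup ℋ] [Module ℂ ℋ] {π : W × F → (ℋ →ₗ[ℂ] ℋ)}

lemma IsHeisenbergRep.apply_eq_smul (hπ : IsHeisenbergRep ω ψ π) (v : W) (z : F) :
    π (v, z) = ψ z • π (v, 0) := by
  obtain ⟨-, hmul, hcenter, -⟩ := hπ
  have hvz : hMul ω (0, z) (v, 0) = (v, z) := by simp [hMul]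
  rw [← hvz, hmul, hcenter, LinearMap.smul_comp, LinearMap.id_comp]

lemma IsHeisenbergRep.isWeylSystem (hchar : ringChar F ≠ 2) (halt : ∀ v, ω v v = 0)
    (hnd : ∀ v, (∀ w, ω v w = 0) → v = 0) (hψ : IsAddChar ψ) (hπ : IsHeisenbergRep ω ψ π) :
    IsWeylSystem (heisenbergBichar ω hψ.toAddChar) fun v => (π (v, 0) : End ℂ ℋ) where
  apply_zero := hπ.1
  apply_mul_apply v w := by
    have hvw : hMul ω (v, 0) (w, 0) = (v + w, (2 : F)⁻¹ * ω v w) := by simp [hMul]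
    exact (hπ.2.1 _ _).symm.trans (hvw ▸ hπ.apply_eq_smul _ _)
  alternating v := by
    rw [heisenbergBichar_apply, halt, mul_zero, AddChar.map_zero_eq_one]
  separating :=
    heisenbergBichar_separating (Ring.two_ne_zero hchar) hnd hψ.toAddChar_ne_one
  irreducible W hW := hπ.2.2.2 W fun ⟨v, z⟩ x hx =>
    hπ.apply_eq_smul v z ▸ W.smul_mem (ψ z) (hW v hx)

end HeisenbergRep

/-- existence of the linear Weil representation.  There is a group
homomorphism `ρ : Sp(V) → GL(ℋ)` with `ρ(g) ∘ π(h) ∘ ρ(g)⁻¹ = π(g·h)`. -/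
theorem weil_representation_exists
    (ω : V →ₗ[k] V →ₗ[k] k) (n : ℕ)
    (hchar : ringChar k ≠ 2)
    (hdim : Module.finrank k V = 2 * n)
    (halt : ∀ v : V, ω v v = 0)
    (hnd : ∀ v : V, (∀ u : V, ω v u = 0) → v = 0)
    (ψ : k → ℂ) (hψ : IsAddChar ψ)
    (ℋ : Type) [AddCommGroup ℋ] [Module ℂ ℋ] [FiniteDimensional ℂ ℋ] [Nontrivial ℋ]
    (π : V × k → (ℋ →ₗ[ℂ] ℋ)) (hπ : IsHeisenbergRep ω ψ π) :
    ∃ ρ : ↥(Sp ω) →* (ℋ ≃ₗ[ℂ] ℋ),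
      ∀ (g : Sp ω) (v : V) (z : k) (x : ℋ),
        ρ g (π (v, z) ((ρ g)⁻¹ x)) = π ((g : V ≃ₗ[k] V) v, z) x := by
  obtain ⟨ρ, hρ⟩ := weil_representation_exists_general (Γ := Sp ω)
    (hπ.isWeylSystem hchar halt hnd hψ) fun g v w => congr(ψ ((2 : k)⁻¹ * $(g.2 v w)))
  refine ⟨ρ, fun g v z x => ?_⟩
  rw [hπ.apply_eq_smul v, hπ.apply_eq_smul ((g : V ≃ₗ[k] V) v), LinearMap.smul_apply, map_smul]
  exact congr(ψ z • $(hρ g v x))
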